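/- Assume good X, good Y, ↑good inp, ↑goodAbs binp, |dom inp| < |var| and |dom binp| < |var|. Then: (1) (Var xs x)[Y/y]_ys = Y if (xs,x) = (ys,y), and (Var xs x)[Y/y]_ys = Var xs x otherwise; (2) (Op δ inp binp)[Y/y]_ys = Op δ (↑(_[Y/y]_ys) inp) (↑(_[Y/y]_ys) binp); (3) if (xs,x) ≠ (ys,y) and fresh xs x Y, then (Abs xs x X)[Y/y]_ys = Abs xs x (X[Y/y]_ys). -/

import Mathlib

open scoped Classical

universe u

section Binding

variable (var varsort index bindex opsym : Type u)

/-! ### Inputs -/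

/-- An `(α,β)`-input: a partial function from `α` to `β`. -/
abbrev Input (α β : Type u) : Type u := α → Option β

/-- The domain of an input. -/
def idom {α β : Type u} (inp : Input α β) : Set α := {a | inp a ≠ none}

/-- The componentwise lifting of a predicate to inputs. -/
def liftP {α β : Type u} (P : β → Prop) (inp : Input α β) : Prop :=
  ∀ a b, inp a = some b → P b

/-- The componentwise lifting of a function to inputs. -/
def liftF {α β γ : Type u} (f : β → γ) (inp : Input α β) : Input α γ :=
  fun a => (inp a).map f

/-- An input is small if its domain has cardinality smaller than that of `var`. -/
def smallDom {α β : Type u} (inp : Input α β) : Prop :=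
  Cardinal.mk (idom inp) < Cardinal.mk var

/-! ### Quasiterms -/

mutual
/-- Quasiterms: raw terms before quotienting by alpha-equivalence. -/
inductive QTerm : Type u where
  | qVar : varsort → var → QTerm
  | qOp : opsym → (index → Option QTerm) → (bindex → Option QAbs) → QTerm
/-- Quasiabstractions. -/
inductive QAbs : Type u where
  | qAbs : varsort → var → QTerm → QAbs
end

/-- Transposition of two variables. -/
noncomputable def swapVar (z1 z2 x : var) : var :=
  if x = z1 then z2 else if x = z2 then z1 else x

/-- Sort-aware transposition of variables (acts only on variables of varsort `zs`). -/
noncomputable def swapVarS (zs xs : varsort) (z1 z2 x : var) : var :=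
  if xs = zs then swapVar var z1 z2 x else x

variable {var varsort index bindex opsym}

/-- Swapping of the variables `z1`, `z2` at varsort `zs` in a quasiterm
(transposing them everywhere, including binding positions). -/
noncomputable def qSwap (z1 z2 : var) (zs : varsort) :
    QTerm var varsort index bindex opsym → QTerm var varsort index bindex opsym :=
  QTerm.rec (motive_1 := fun _ => QTerm var varsort index bindex opsym)
    (motive_2 := fun _ => QAbs var varsort index bindex opsym)
    (motive_3 := fun _ => Option (QTerm var varsort index bindex opsym))
    (motive_4 := fun _ => Option (QAbs var varsort index bindex opsym))
    (fun xs x => .qVar xs (swapVarS var varsort zs xs z1 z2 x))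
    (fun d _ _ rinp rbinp => .qOp d rinp rbinp)
    (fun xs x _ rX => .qAbs xs (swapVarS var varsort zs xs z1 z2 x) rX)
    none (fun _ r => some r) none (fun _ r => some r)

/-- Swapping of variables in a quasiabstraction. -/
noncomputable def qSwapAbs (z1 z2 : var) (zs : varsort) :
    QAbs var varsort index bindex opsym → QAbs var varsort index bindex opsym
  | .qAbs xs x X => .qAbs xs (swapVarS var varsort zs xs z1 z2 x) (qSwap z1 z2 zs X)

/-! ### Freshness and goodness -/

mutual
/-- `QFresh ys y X`: the variable `y` of varsort `ys` has no free occurrence in `X`. -/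
inductive QFresh : varsort → var → QTerm var varsort index bindex opsym → Prop where
  | qVar : ∀ {ys y xs x}, (ys, y) ≠ (xs, x) → QFresh ys y (.qVar xs x)
  | qOp : ∀ {ys y d inp binp}, (∀ i X, inp i = some X → QFresh ys y X) →
      (∀ j A, binp j = some A → QFreshAbs ys y A) → QFresh ys y (.qOp d inp binp)
/-- Freshness for quasiabstractions. -/
inductive QFreshAbs : varsort → var → QAbs var varsort index bindex opsym → Prop where
  | qAbs_bound : ∀ {xs x X}, QFreshAbs xs x (.qAbs xs x X)
  | qAbs_body : ∀ {ys y xs x X}, QFresh ys y X → QFreshAbs ys y (.qAbs xs x X)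
end

mutual
/-- Good quasiterms: all constructors branch less than `|var|`. -/
inductive QGood : QTerm var varsort index bindex opsym → Prop where
  | qVar : ∀ {xs x}, QGood (.qVar xs x)
  | qOp : ∀ {d inp binp}, (∀ i X, inp i = some X → QGood X) →
      (∀ j A, binp j = some A → QGoodAbs A) →
      smallDom var inp → smallDom var binp → QGood (.qOp d inp binp)
/-- Good quasiabstractions. -/
inductive QGoodAbs : QAbs var varsort index bindex opsym → Prop where
  | qAbs : ∀ {xs x X}, QGood X → QGoodAbs (.qAbs xs x X)
end

/-! ### Alpha-equivalence -/

mutual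
/-- Alpha-equivalence of quasiterms. -/
inductive Alpha : QTerm var varsort index bindex opsym →
    QTerm var varsort index bindex opsym → Prop where
  | qVar : ∀ {xs x}, Alpha (.qVar xs x) (.qVar xs x)
  | qOp : ∀ {d inp binp inp' binp'},
      (∀ i, inp i = none ↔ inp' i = none) →
      (∀ i X X', inp i = some X → inp' i = some X' → Alpha X X') →
      (∀ j, binp j = none ↔ binp' j = none) →
      (∀ j A A', binp j = some A → binp' j = some A' → AlphaAbs A A') →
      Alpha (.qOp d inp binp) (.qOp d inp' binp')
/-- Alpha-equivalence of quasiabstractions (the exists-fresh formulation). -/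
inductive AlphaAbs : QAbs var varsort index bindex opsym →
    QAbs var varsort index bindex opsym → Prop where
  | qAbs : ∀ {xs x x' X X' y}, y ∉ ({x, x'} : Set var) →
      QFresh xs y X → QFresh xs y X' →
      Alpha (qSwap y x xs X) (qSwap y x' xs X') →
      AlphaAbs (.qAbs xs x X) (.qAbs xs x' X')
end

/-! ### Terms and abstractions as quotients -/

variable (var varsort index bindex opsym)

/-- Terms: quasiterms modulo alpha-equivalence. -/
def Term : Type u := Quot (@Alpha var varsort index bindex opsym)

/-- Abstractions: quasiabstractions modulo alpha-equivalence. -/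
def Abstr : Type u := Quot (@AlphaAbs var varsort index bindex opsym)

variable {var varsort index bindex opsym}

/-- The projection from quasiterms to terms. -/
def tmk : QTerm var varsort index bindex opsym → Term var varsort index bindex opsym :=
  Quot.mk _

/-- The projection from quasiabstractions to abstractions. -/
def amk : QAbs var varsort index bindex opsym → Abstr var varsort index bindex opsym :=
  Quot.mk _

/-- A representative of a term. -/
noncomputable def trep (X : Term var varsort index bindex opsym) :
    QTerm var varsort index bindex opsym := Quot.out X

/-- A representative of an abstraction. -/
noncomputable def arep (A : Abstr var varsort index bindex opsym) :
    QAbs var varsort index bindex opsym := Quot.out A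

/-- Good terms. -/
def good (X : Term var varsort index bindex opsym) : Prop := QGood (trep X)

/-- Good abstractions. -/
def goodAbs (A : Abstr var varsort index bindex opsym) : Prop := QGoodAbs (arep A)

/-- The variable-injection constructor on terms. -/
def Var (xs : varsort) (x : var) : Term var varsort index bindex opsym :=
  tmk (.qVar xs x)

/-- The operation constructor on terms. -/
noncomputable def Op (d : opsym) (inp : Input index (Term var varsort index bindex opsym))
    (binp : Input bindex (Abstr var varsort index bindex opsym)) :
    Term var varsort index bindex opsym :=
  tmk (.qOp d (liftF trep inp) (liftF arep binp))

/-- The abstraction constructor. -/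
noncomputable def Abs (xs : varsort) (x : var) (X : Term var varsort index bindex opsym) :
    Abstr var varsort index bindex opsym :=
  amk (.qAbs xs x (trep X))

/-- Freshness on terms. -/
def fresh (ys : varsort) (y : var) (X : Term var varsort index bindex opsym) : Prop :=
  QFresh ys y (trep X)

/-- Freshness on abstractions. -/
def freshAbs (ys : varsort) (y : var) (A : Abstr var varsort index bindex opsym) : Prop :=
  QFreshAbs ys y (arep A)

/-- Swapping on terms. -/
noncomputable def tswap (X : Term var varsort index bindex opsym)
    (z1 z2 : var) (zs : varsort) : Term var varsort index bindex opsym :=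
  tmk (qSwap z1 z2 zs (trep X))

/-! ### Substitution -/

mutual
/-- The graph of capture-avoiding substitution on quasiterms:
`QSubst X Y y ys Z` means that `Z` is a result of substituting `Y` for the free
occurrences of the variable `y` of varsort `ys` in `X` (along a capture-free
representative). -/
inductive QSubst : QTerm var varsort index bindex opsym →
    QTerm var varsort index bindex opsym → var → varsort →
    QTerm var varsort index bindex opsym → Prop where
  | var_eq : ∀ {Y y ys}, QSubst (.qVar ys y) Y y ys Y
  | var_ne : ∀ {Y y ys xs x}, (xs, x) ≠ (ys, y) → QSubst (.qVar xs x) Y y ys (.qVar xs x)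
  | op : ∀ {Y y ys d inp binp inp' binp'},
      (∀ i, inp i = none ↔ inp' i = none) →
      (∀ i X X', inp i = some X → inp' i = some X' → QSubst X Y y ys X') →
      (∀ j, binp j = none ↔ binp' j = none) →
      (∀ j A A', binp j = some A → binp' j = some A' → QSubstAbs A Y y ys A') →
      QSubst (.qOp d inp binp) Y y ys (.qOp d inp' binp')
/-- The graph of capture-avoiding substitution on quasiabstractions. -/
inductive QSubstAbs : QAbs var varsort index bindex opsym →
    QTerm var varsort index bindex opsym → var → varsort →
    QAbs var varsort index bindex opsym → Prop where
  | abs : ∀ {Y y ys xs x X X'}, (xs, x) ≠ (ys, y) → QFresh xs x Y →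
      QSubst X Y y ys X' → QSubstAbs (.qAbs xs x X) Y y ys (.qAbs xs x X')
end

/-- The graph of capture-avoiding substitution on terms. -/
def SubstRel (X Y : Term var varsort index bindex opsym) (y : var) (ys : varsort)
    (Z : Term var varsort index bindex opsym) : Prop :=
  ∃ qX qZ, tmk qX = X ∧ tmk qZ = Z ∧ QSubst qX (trep Y) y ys qZ

/-- Capture-avoiding substitution on terms: `subst X Y y ys` is `X[Y/y]_ys`. -/
noncomputable def subst (X Y : Term var varsort index bindex opsym)
    (y : var) (ys : varsort) : Term var varsort index bindex opsym :=
  if h : ∃ Z, SubstRel X Y y ys Z then h.choose else X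

/-- The graph of capture-avoiding substitution on abstractions. -/
def SubstAbsRel (A : Abstr var varsort index bindex opsym)
    (Y : Term var varsort index bindex opsym) (y : var) (ys : varsort)
    (B : Abstr var varsort index bindex opsym) : Prop :=
  ∃ qA qB, amk qA = A ∧ amk qB = B ∧ QSubstAbs qA (trep Y) y ys qB

/-- Capture-avoiding substitution on abstractions: `substAbs A Y y ys` is `A[Y/y]_ys`. -/
noncomputable def substAbs (A : Abstr var varsort index bindex opsym)
    (Y : Term var varsort index bindex opsym) (y : var) (ys : varsort) :
    Abstr var varsort index bindex opsym :=
  if h : ∃ B, SubstAbsRel A Y y ys B then h.choose else A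

/-! ### Parallel substitution -/

mutual
/-- The graph of capture-avoiding parallel substitution on quasiterms, along an
assignment `ρ : varsort → var → Option qterm`. -/
inductive QPSubst : QTerm var varsort index bindex opsym →
    (varsort → var → Option (QTerm var varsort index bindex opsym)) →
    QTerm var varsort index bindex opsym → Prop where
  | var_some : ∀ {ρ xs x Y}, ρ xs x = some Y → QPSubst (.qVar xs x) ρ Y
  | var_none : ∀ {ρ xs x}, ρ xs x = none → QPSubst (.qVar xs x) ρ (.qVar xs x)
  | op : ∀ {ρ d inp binp inp' binp'},
      (∀ i, inp i = none ↔ inp' i = none) →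
      (∀ i X X', inp i = some X → inp' i = some X' → QPSubst X ρ X') →
      (∀ j, binp j = none ↔ binp' j = none) →
      (∀ j A A', binp j = some A → binp' j = some A' → QPSubstAbs A ρ A') →
      QPSubst (.qOp d inp binp) ρ (.qOp d inp' binp')
/-- The graph of capture-avoiding parallel substitution on quasiabstractions. -/
inductive QPSubstAbs : QAbs var varsort index bindex opsym →
    (varsort → var → Option (QTerm var varsort index bindex opsym)) →
    QAbs var varsort index bindex opsym → Prop where
  | abs : ∀ {ρ xs x X X'}, ρ xs x = none →
      (∀ ys y Y, ρ ys y = some Y → QFresh xs x Y) →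
      QPSubst X ρ X' → QPSubstAbs (.qAbs xs x X) ρ (.qAbs xs x X')
end

/-- Turning a term-valued assignment into a quasiterm-valued one, by picking
representatives. -/
noncomputable def qassign (ρ : varsort → var → Option (Term var varsort index bindex opsym)) :
    varsort → var → Option (QTerm var varsort index bindex opsym) :=
  fun xs x => (ρ xs x).map trep

/-- The graph of parallel substitution on terms. -/
def PSubstRel (X : Term var varsort index bindex opsym)
    (ρ : varsort → var → Option (Term var varsort index bindex opsym))
    (Z : Term var varsort index bindex opsym) : Prop :=
  ∃ qX qZ, tmk qX = X ∧ tmk qZ = Z ∧ QPSubst qX (qassign ρ) qZ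

/-- Capture-avoiding parallel substitution on terms: `psubst X ρ` is `X[ρ]`. -/
noncomputable def psubst (X : Term var varsort index bindex opsym)
    (ρ : varsort → var → Option (Term var varsort index bindex opsym)) :
    Term var varsort index bindex opsym :=
  if h : ∃ Z, PSubstRel X ρ Z then h.choose else X

/-- The graph of parallel substitution on abstractions. -/
def PSubstAbsRel (A : Abstr var varsort index bindex opsym)
    (ρ : varsort → var → Option (Term var varsort index bindex opsym))
    (B : Abstr var varsort index bindex opsym) : Prop :=
  ∃ qA qB, amk qA = A ∧ amk qB = B ∧ QPSubstAbs qA (qassign ρ) qB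

/-- Capture-avoiding parallel substitution on abstractions. -/
noncomputable def psubstAbs (A : Abstr var varsort index bindex opsym)
    (ρ : varsort → var → Option (Term var varsort index bindex opsym)) :
    Abstr var varsort index bindex opsym :=
  if h : ∃ B, PSubstAbsRel A ρ B then h.choose else A

/-!
Sorted permutations of the variables act on quasiterms by renaming all variables, and swapping is
the action of a transposition. The image of a good quasiterm under a permutation depends, up to
alpha-equivalence, only on what the permutation does to the free variables; hence the bound variable
of an abstraction may be replaced by any variable fresh for the body. Since the cardinal of `var` is
regular, a good quasiterm has fewer than `|var|` free variables, so a variable that avoids any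
finite number of good quasiterms always exists. Renaming bound variables to such variables shows
that on good quasiterms substitution is defined and determined up to alpha-equivalence, so that
`X[Y/y]_ys = Z` on good terms as soon as representatives of `X` and `Z` are related by the graph of
substitution.
-/

/-! ### Lifting relations to inputs -/

/-- The componentwise lifting `↑R` of a relation: two inputs are related if they have the same
domain and `R` holds componentwise. -/
def liftR {ι α β : Type u} (R : α → β → Prop) (inp : Input ι α) (inp' : Input ι β) : Prop :=
  ∀ i, Option.Rel R (inp i) (inp' i)

section Inputs

variable {ι α β γ δ : Type u} {P : α → Prop} {R : α → β → Prop}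
  {inp : Input ι α} {inp' : Input ι β}

theorem liftR_iff : liftR R inp inp' ↔
    (∀ i, inp i = none ↔ inp' i = none) ∧
      ∀ i a b, inp i = some a → inp' i = some b → R a b := by
  rw [liftR, ← forall_and]
  refine forall_congr' fun i => ?_
  rcases inp i with _ | a <;> rcases inp' i with _ | b <;> simp

theorem liftR.imp {S : α → β → Prop} (h : liftR R inp inp')
    (hRS : ∀ i a b, inp i = some a → R a b → S a b) : liftR S inp inp' := by
  rw [liftR_iff] at h ⊢
  exact ⟨h.1, fun i a b ha hb => hRS i a b ha (h.2 i a b ha hb)⟩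

theorem liftR.swap (h : liftR R inp inp') : liftR (Function.swap R) inp' inp := by
  rw [liftR_iff] at h ⊢
  exact ⟨fun i => (h.1 i).symm, fun i b a hb ha => h.2 i a b ha hb⟩

theorem liftR.liftP_right {Q : β → Prop} (h : liftR R inp inp')
    (hRQ : ∀ i a b, inp i = some a → R a b → Q b) : liftP Q inp' := by
  rw [liftR_iff] at h
  intro i b hb
  obtain ⟨a, ha⟩ : ∃ a, inp i = some a :=
    Option.ne_none_iff_exists'.1 fun hnone => by simp [(h.1 i).1 hnone] at hb
  exact hRQ i a b ha (h.2 i a b ha hb)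

theorem liftR.idom_eq (h : liftR R inp inp') : idom inp = idom inp' :=
  Set.ext fun i => not_congr ((liftR_iff.1 h).1 i)

theorem liftR_self_iff {R : α → α → Prop} : liftR R inp inp ↔ liftP (fun a => R a a) inp := by
  simp only [liftR_iff, implies_true, true_and, liftP]
  grind

theorem liftR_liftF_left {f : γ → α} {inp : Input ι γ} :
    liftR R (liftF f inp) inp' ↔ liftR (fun c b => R (f c) b) inp inp' := by
  refine forall_congr' fun i => ?_
  rcases hinp : inp i with _ | c <;> rcases inp' i with _ | b <;> simp [liftF, hinp]

theorem liftR_liftF_right {f : γ → β} {inp' : Input ι γ} :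
    liftR R inp (liftF f inp') ↔ liftR (fun a c => R a (f c)) inp inp' := by
  refine forall_congr' fun i => ?_
  rcases inp i with _ | c <;> rcases hinp : inp' i with _ | b <;> simp [liftF, hinp]

theorem liftP_liftF_iff {f : γ → α} {inp : Input ι γ} :
    liftP P (liftF f inp) ↔ liftP (fun c => P (f c)) inp := by
  refine forall_congr' fun i => ?_
  rcases hinp : inp i with _ | c <;> simp [liftF, hinp]

theorem liftP_congr {Q : α → Prop} (h : liftP (fun a => P a ↔ Q a) inp) :
    liftP P inp ↔ liftP Q inp :=
  forall_congr' fun i => forall_congr' fun a => imp_congr_right fun ha => h i a ha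

theorem idom_liftF (f : α → β) (inp : Input ι α) : idom (liftF f inp) = idom inp := by
  ext i
  simp [idom, liftF]

theorem liftF_liftF (g : β → γ) (f : α → β) (inp : Input ι α) :
    liftF g (liftF f inp) = liftF (fun a => g (f a)) inp := by
  funext i
  simp [liftF, Function.comp_def]

theorem liftF_eq_self {f : α → α} (h : liftP (fun a => f a = a) inp) : liftF f inp = inp := by
  funext i
  have hi := h i
  rcases hinp : inp i with _ | a <;> simp_all [liftF]

theorem liftF_congr {f g : α → β} (h : liftP (fun a => f a = g a) inp) :
    liftF f inp = liftF g inp := by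
  funext i
  have hi := h i
  rcases hinp : inp i with _ | a <;> simp_all [liftF]

theorem liftP.exists_liftR (h : liftP (fun a => ∃ b, R a b) inp) : ∃ inp', liftR R inp inp' := by
  have hi : ∀ i, ∃ o, Option.Rel R (inp i) o := by
    intro i
    rcases hinp : inp i with _ | a
    · exact ⟨none, .none⟩
    · obtain ⟨b, hb⟩ := h i a hinp
      exact ⟨some b, .some hb⟩
  exact ⟨fun i => (hi i).choose, fun i => (hi i).choose_spec⟩

theorem liftR.exists_of_comp {S : β → γ → Prop} {inp'' : Input ι γ}
    (h : liftR (Relation.Comp R S) inp inp'') : ∃ inp', liftR R inp inp' ∧ liftR S inp' inp'' := by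
  have hi : ∀ i, ∃ o, Option.Rel R (inp i) o ∧ Option.Rel S o (inp'' i) := by
    intro i
    have hR := h i
    generalize inp i = o, inp'' i = o'' at hR ⊢
    cases hR with
    | none => exact ⟨none, .none, .none⟩
    | some hac =>
      obtain ⟨b, hab, hbc⟩ := hac
      exact ⟨some b, .some hab, .some hbc⟩
  choose inp' h₁ h₂ using hi
  exact ⟨inp', h₁, h₂⟩

theorem liftR.join {S : α → γ → Prop} {T : β → γ → Prop} {inp'' : Input ι γ}
    (h : liftR R inp inp') (h' : liftR S inp inp'')
    (hT : ∀ i a b c, inp i = some a → R a b → S a c → T b c) : liftR T inp' inp'' := by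
  intro i
  have hR := h i
  have hS := h' i
  have hTi := hT i
  generalize inp i = o, inp' i = o', inp'' i = o'' at hR hS hTi ⊢
  cases hR with
  | none => cases hS; exact .none
  | some hab =>
    cases hS with
    | some hac => exact .some (hTi _ _ _ rfl hab hac)

theorem liftR.comp {S : β → γ → Prop} {inp'' : Input ι γ} (h : liftR R inp inp')
    (h' : liftR S inp' inp'') : liftR (Relation.Comp R S) inp inp'' :=
  h.swap.join h' fun _ b _ _ _ hab hbc => ⟨b, hab, hbc⟩

theorem liftR.exists_liftF_eq {f : α → γ} {g : β → δ} {out : Input ι γ} {out' : Input ι δ}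
    (h : liftR (fun c d => ∃ a b, f a = c ∧ g b = d ∧ R a b) out out') :
    ∃ inp inp', liftR R inp inp' ∧ liftF f inp = out ∧ liftF g inp' = out' := by
  have hi : ∀ i, ∃ o o', Option.Rel R o o' ∧ o.map f = out i ∧ o'.map g = out' i := by
    intro i
    have hR := h i
    generalize out i = o, out' i = o' at hR ⊢
    cases hR with
    | none => exact ⟨none, none, .none, rfl, rfl⟩
    | some hab =>
      obtain ⟨a, b, rfl, rfl, hab⟩ := hab
      exact ⟨some a, some b, .some hab, rfl, rfl⟩
  choose inp inp' hR hf hg using hi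
  exact ⟨inp, inp', hR, funext hf, funext hg⟩

end Inputs

/-! ### Renaming by sorted permutations -/

theorem QTerm.structural_induction {P : QTerm var varsort index bindex opsym → Prop}
    {Q : QAbs var varsort index bindex opsym → Prop} (hVar : ∀ xs x, P (.qVar xs x))
    (hOp : ∀ d inp binp, liftP P inp → liftP Q binp → P (.qOp d inp binp))
    (hAbs : ∀ xs x X, P X → Q (.qAbs xs x X)) : (∀ X, P X) ∧ ∀ A, Q A := by
  have key : ∀ X, P X := fun X =>
    QTerm.rec (motive_1 := P) (motive_2 := Q) (motive_3 := fun o => ∀ X, o = some X → P X)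
      (motive_4 := fun o => ∀ A, o = some A → Q A) hVar (fun d inp binp => hOp d inp binp) hAbs
      (fun _ h => nomatch h) (fun _ hX _ h => Option.some.inj h ▸ hX)
      (fun _ h => nomatch h) (fun _ hA _ h => Option.some.inj h ▸ hA) X
  exact ⟨key, fun ⟨xs, x, X⟩ => hAbs xs x X (key X)⟩

variable (var varsort) in
/-- Sorted permutations: one permutation of the variables for each varsort. They form a group under
componentwise composition, which acts on quasiterms by renaming all variables, bound or free. -/
abbrev SortedPerm : Type u := varsort → Equiv.Perm var

/-- Renaming of all variables in a quasiterm along a sorted permutation; the operation underlying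
the group action `π • X`. -/
noncomputable def QTerm.rename (π : SortedPerm var varsort) :
    QTerm var varsort index bindex opsym → QTerm var varsort index bindex opsym :=
  QTerm.rec (motive_1 := fun _ => QTerm var varsort index bindex opsym)
    (motive_2 := fun _ => QAbs var varsort index bindex opsym)
    (motive_3 := fun _ => Option (QTerm var varsort index bindex opsym))
    (motive_4 := fun _ => Option (QAbs var varsort index bindex opsym))
    (fun xs x => .qVar xs (π xs x)) (fun d _ _ rinp rbinp => .qOp d rinp rbinp)
    (fun xs x _ rX => .qAbs xs (π xs x) rX) none (fun _ r => some r) none (fun _ r => some r)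

noncomputable instance : SMul (SortedPerm var varsort) (QTerm var varsort index bindex opsym) :=
  ⟨QTerm.rename⟩

noncomputable instance : SMul (SortedPerm var varsort) (QAbs var varsort index bindex opsym) :=
  ⟨fun π => fun | .qAbs xs x X => .qAbs xs (π xs x) (π • X)⟩

theorem smul_qVar (π : SortedPerm var varsort) (xs : varsort) (x : var) :
    π • (.qVar xs x : QTerm var varsort index bindex opsym) = .qVar xs (π xs x) := rfl

theorem smul_qAbs (π : SortedPerm var varsort) (xs : varsort) (x : var)
    (X : QTerm var varsort index bindex opsym) :
    π • QAbs.qAbs xs x X = .qAbs xs (π xs x) (π • X) := rfl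

theorem smul_qOp (π : SortedPerm var varsort) (d : opsym)
    (inp : Input index (QTerm var varsort index bindex opsym))
    (binp : Input bindex (QAbs var varsort index bindex opsym)) :
    π • QTerm.qOp d inp binp = .qOp d (liftF (π • ·) inp) (liftF (π • ·) binp) := by
  change QTerm.qOp d _ _ = _
  congr 1
  · funext i
    rcases hinp : inp i with _ | X <;> rw [liftF, hinp] <;> rfl
  · funext j
    rcases hbinp : binp j with _ | ⟨xs, x, X⟩ <;> rw [liftF, hbinp] <;> rfl

theorem one_smul_qTerm_qAbs :
    (∀ X : QTerm var varsort index bindex opsym, (1 : SortedPerm var varsort) • X = X) ∧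
      ∀ A : QAbs var varsort index bindex opsym, (1 : SortedPerm var varsort) • A = A := by
  refine QTerm.structural_induction (fun xs x => ?_) (fun d inp binp hinp hbinp => ?_)
    fun xs x X hX => ?_
  · rw [smul_qVar, Pi.one_apply, Equiv.Perm.one_apply]
  · rw [smul_qOp, liftF_eq_self hinp, liftF_eq_self hbinp]
  · rw [smul_qAbs, Pi.one_apply, Equiv.Perm.one_apply, hX]

theorem mul_smul_qTerm_qAbs (π σ : SortedPerm var varsort) :
    (∀ X : QTerm var varsort index bindex opsym, (π * σ) • X = π • σ • X) ∧
      ∀ A : QAbs var varsort index bindex opsym, (π * σ) • A = π • σ • A := by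
  refine QTerm.structural_induction (fun xs x => ?_) (fun d inp binp hinp hbinp => ?_)
    fun xs x X hX => ?_
  · simp only [smul_qVar, Pi.mul_apply, Equiv.Perm.mul_apply]
  · simp only [smul_qOp, liftF_liftF, liftF_congr hinp, liftF_congr hbinp]
  · simp only [smul_qAbs, Pi.mul_apply, Equiv.Perm.mul_apply, hX]

noncomputable instance :
    MulAction (SortedPerm var varsort) (QTerm var varsort index bindex opsym) where
  one_smul := one_smul_qTerm_qAbs.1
  mul_smul π σ := (mul_smul_qTerm_qAbs π σ).1

noncomputable instance :
    MulAction (SortedPerm var varsort) (QAbs var varsort index bindex opsym) where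
  one_smul := one_smul_qTerm_qAbs.2
  mul_smul π σ := (mul_smul_qTerm_qAbs π σ).2

/-- The sorted permutation transposing `z₁` and `z₂` at varsort `zs`; renaming along it is swapping
(`qSwap_eq_smul`). -/
noncomputable def swapPerm (zs : varsort) (z₁ z₂ : var) : SortedPerm var varsort :=
  Pi.mulSingle zs (Equiv.swap z₁ z₂)

theorem swapPerm_apply (zs xs : varsort) (z₁ z₂ x : var) :
    swapPerm zs z₁ z₂ xs x = if xs = zs then Equiv.swap z₁ z₂ x else x := by
  obtain rfl | hne := eq_or_ne xs zs
  · simp [swapPerm]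
  · simp [swapPerm, hne]

theorem swapPerm_apply_left (zs : varsort) (z₁ z₂ : var) : swapPerm zs z₁ z₂ zs z₁ = z₂ := by
  simp [swapPerm_apply]

theorem swapPerm_apply_right (zs : varsort) (z₁ z₂ : var) : swapPerm zs z₁ z₂ zs z₂ = z₁ := by
  simp [swapPerm_apply]

theorem swapPerm_apply_of_ne {zs xs : varsort} {z₁ z₂ x : var} (h₁ : (xs, x) ≠ (zs, z₁))
    (h₂ : (xs, x) ≠ (zs, z₂)) : swapPerm zs z₁ z₂ xs x = x := by
  rw [swapPerm_apply]
  split_ifs with h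
  · subst h
    exact Equiv.swap_apply_of_ne_of_ne (by simpa using h₁) (by simpa using h₂)
  · rfl

theorem swapPerm_mul_self (zs : varsort) (z₁ z₂ : var) :
    swapPerm zs z₁ z₂ * swapPerm zs z₁ z₂ = 1 := by
  rw [swapPerm, ← Pi.mulSingle_mul, Equiv.swap_mul_self, Pi.mulSingle_one]

theorem swapVarS_eq_swapPerm (zs xs : varsort) (z₁ z₂ x : var) :
    swapVarS var varsort zs xs z₁ z₂ x = swapPerm zs z₁ z₂ xs x := by
  simp only [swapVarS, swapVar, swapPerm_apply, Equiv.swap_apply_def]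

theorem qSwap_eq_smul (zs : varsort) (z₁ z₂ : var) (X : QTerm var varsort index bindex opsym) :
    qSwap z₁ z₂ zs X = swapPerm zs z₁ z₂ • X := by
  change qSwap z₁ z₂ zs X = QTerm.rename (swapPerm zs z₁ z₂) X
  simp only [qSwap, QTerm.rename, swapVarS_eq_swapPerm]

/-- In the abstraction case the induction hypothesis is available for every renaming of the body, so
the bound variable may be chosen fresh first. -/
theorem QTerm.induction_up_to_renaming {P : QTerm var varsort index bindex opsym → Prop}
    {Q : QAbs var varsort index bindex opsym → Prop} (hVar : ∀ xs x, P (.qVar xs x))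
    (hOp : ∀ d inp binp, liftP P inp → liftP Q binp → P (.qOp d inp binp))
    (hAbs : ∀ xs x X, (∀ π : SortedPerm var varsort, P (π • X)) → Q (.qAbs xs x X)) :
    (∀ X, P X) ∧ ∀ A, Q A := by
  obtain ⟨hP, hQ⟩ : (∀ X, ∀ π : SortedPerm var varsort, P (π • X)) ∧
      ∀ A, ∀ π : SortedPerm var varsort, Q (π • A) := by
    refine QTerm.structural_induction (fun xs x π => hVar xs _) (fun d inp binp hinp hbinp π => ?_)
      fun xs x X hX π => hAbs _ _ _ fun σ => ?_
    · rw [smul_qOp]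
      exact hOp _ _ _ (liftP_liftF_iff.2 fun i X hi => hinp i X hi π)
        (liftP_liftF_iff.2 fun j A hj => hbinp j A hj π)
    · rw [← mul_smul]
      exact hX _
  exact ⟨fun X => one_smul (SortedPerm var varsort) X ▸ hP X 1,
    fun A => one_smul (SortedPerm var varsort) A ▸ hQ A 1⟩

/-! ### Freshness and goodness -/

section FreshGood

variable {xs ys : varsort} {x y : var} {d : opsym} {X : QTerm var varsort index bindex opsym}
  {inp : Input index (QTerm var varsort index bindex opsym)}
  {binp : Input bindex (QAbs var varsort index bindex opsym)}

theorem qFresh_qVar_iff :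
    QFresh ys y (.qVar xs x : QTerm var varsort index bindex opsym) ↔ (ys, y) ≠ (xs, x) :=
  ⟨fun | .qVar h => h, .qVar⟩

theorem QFresh.ne_of_not_qFresh (h : QFresh xs x X) (h' : ¬QFresh ys y X) :
    (ys, y) ≠ (xs, x) := by
  rintro ⟨⟩
  exact h' h

theorem qFresh_qOp_iff : QFresh ys y (.qOp d inp binp) ↔
    liftP (QFresh ys y) inp ∧ liftP (QFreshAbs ys y) binp :=
  ⟨fun | .qOp h h' => ⟨h, h'⟩, fun ⟨h, h'⟩ => .qOp h h'⟩

theorem qFreshAbs_qAbs_iff :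
    QFreshAbs ys y (.qAbs xs x X) ↔ (ys, y) = (xs, x) ∨ QFresh ys y X := by
  constructor
  · rintro (_ | h)
    exacts [.inl rfl, .inr h]
  · rintro (heq | h)
    · obtain ⟨rfl, rfl⟩ := Prod.ext_iff.1 heq
      exact .qAbs_bound
    · exact .qAbs_body h

theorem qGood_qOp_iff : QGood (.qOp d inp binp) ↔
    liftP QGood inp ∧ liftP QGoodAbs binp ∧ smallDom var inp ∧ smallDom var binp :=
  ⟨fun | .qOp h h' hs hs' => ⟨h, h', hs, hs'⟩, fun ⟨h, h', hs, hs'⟩ => .qOp h h' hs hs'⟩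

theorem qGoodAbs_qAbs_iff : QGoodAbs (.qAbs xs x X) ↔ QGood X :=
  ⟨fun | .qAbs h => h, .qAbs⟩

theorem qFresh_smul_iff (π : SortedPerm var varsort) (ys : varsort) (y : var) :
    (∀ X : QTerm var varsort index bindex opsym, QFresh ys (π ys y) (π • X) ↔ QFresh ys y X) ∧
      ∀ A : QAbs var varsort index bindex opsym,
        QFreshAbs ys (π ys y) (π • A) ↔ QFreshAbs ys y A := by
  have hπ : ∀ {xs x}, (ys, π ys y) = (xs, π xs x) ↔ (ys, y) = (xs, x) := by
    simp +contextual [Prod.ext_iff]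
  refine QTerm.structural_induction (fun xs x => ?_) (fun d inp binp hinp hbinp => ?_)
    fun xs x X hX => ?_
  · rw [smul_qVar, qFresh_qVar_iff, qFresh_qVar_iff, Ne, hπ]
  · rw [smul_qOp, qFresh_qOp_iff, qFresh_qOp_iff, liftP_liftF_iff, liftP_liftF_iff,
      liftP_congr hinp, liftP_congr hbinp]
  · rw [smul_qAbs, qFreshAbs_qAbs_iff, qFreshAbs_qAbs_iff, hX, hπ]

theorem qGood_smul_iff (π : SortedPerm var varsort) :
    (∀ X : QTerm var varsort index bindex opsym, QGood (π • X) ↔ QGood X) ∧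
      ∀ A : QAbs var varsort index bindex opsym, QGoodAbs (π • A) ↔ QGoodAbs A := by
  refine QTerm.structural_induction (fun xs x => iff_of_true .qVar .qVar)
    (fun d inp binp hinp hbinp => ?_) fun xs x X hX => ?_
  · simp only [smul_qOp, qGood_qOp_iff, liftP_liftF_iff, liftP_congr hinp, liftP_congr hbinp,
      smallDom, idom_liftF]
  · rw [smul_qAbs, qGoodAbs_qAbs_iff, qGoodAbs_qAbs_iff, hX]

theorem QGood.smul (hX : QGood X) (π : SortedPerm var varsort) : QGood (π • X) :=
  ((qGood_smul_iff π).1 X).2 hX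

theorem qFreshAbs_qAbs_iff_swapPerm {z : var} (hz : QFresh xs z X) :
    QFreshAbs ys y (.qAbs xs x X) ↔ (ys, y) = (xs, z) ∨ QFresh ys y (swapPerm xs z x • X) := by
  have hswap := (qFresh_smul_iff (swapPerm xs z x) ys y).1 X
  obtain heqz | hnez := eq_or_ne (ys, y) (xs, z)
  · obtain ⟨rfl, rfl⟩ := Prod.ext_iff.1 heqz
    exact iff_of_true (.qAbs_body hz) (.inl rfl)
  obtain heqx | hnex := eq_or_ne (ys, y) (xs, x)
  · obtain ⟨rfl, rfl⟩ := Prod.ext_iff.1 heqx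
    have hfresh := ((qFresh_smul_iff (swapPerm ys z y) ys z).1 X).2 hz
    rw [swapPerm_apply_left] at hfresh
    exact iff_of_true .qAbs_bound (.inr hfresh)
  · rw [swapPerm_apply_of_ne hnez hnex] at hswap
    rw [qFreshAbs_qAbs_iff, or_iff_right hnex, or_iff_right hnez, hswap]

end FreshGood

section Fresh

open Filter

variable (hreg : (Cardinal.mk var).IsRegular)

theorem exists_of_eventually_cocardinal {p : var → Prop} (h : ∀ᶠ z in cocardinal var hreg, p z) :
    ∃ z, p z :=
  have : (cocardinal var hreg).NeBot := by
    rw [neBot_iff, Ne, ← empty_mem_iff_bot, mem_cocardinal, Set.compl_empty, Cardinal.mk_univ]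
    exact lt_irrefl _
  h.exists

theorem liftP.eventually_cocardinal {ι β : Type u} {p : var → β → Prop} {inp : Input ι β}
    (hs : smallDom var inp) (h : liftP (fun b => ∀ᶠ z in cocardinal var hreg, p z b) inp) :
    ∀ᶠ z in cocardinal var hreg, liftP (p z) inp := by
  have hdom : ∀ᶠ z in cocardinal var hreg, ∀ i ∈ idom inp, ∀ b, inp i = some b → p z b := by
    refine (eventually_cardinal_ball hs).2 fun i hi => ?_
    obtain ⟨b, hb⟩ := Option.ne_none_iff_exists'.1 hi
    filter_upwards [h i b hb] with z hz b' hb'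
    rwa [← Option.some.inj (hb.symm.trans hb')]
  filter_upwards [hdom] with z hz i b hb
  exact hz i (Option.ne_none_iff_exists'.2 ⟨b, hb⟩) b hb

theorem eventually_qFresh_of_qGood (zs : varsort) :
    (∀ X : QTerm var varsort index bindex opsym, QGood X →
      ∀ᶠ z in cocardinal var hreg, QFresh zs z X) ∧
    ∀ A : QAbs var varsort index bindex opsym, QGoodAbs A →
      ∀ᶠ z in cocardinal var hreg, QFreshAbs zs z A := by
  refine QTerm.structural_induction (fun xs x _ => ?_) (fun d inp binp hinp hbinp hgood => ?_)
    fun xs x X hX hgood => ?_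
  · filter_upwards [eventually_cocardinal_ne x] with z hz
    exact .qVar fun heq => hz (Prod.ext_iff.1 heq).2
  · obtain ⟨hg, hg', hs, hs'⟩ := qGood_qOp_iff.1 hgood
    filter_upwards
      [liftP.eventually_cocardinal hreg hs fun i X hi => hinp i X hi (hg i X hi),
        liftP.eventually_cocardinal hreg hs' fun j A hj => hbinp j A hj (hg' j A hj)] with z hz hz'
    exact .qOp hz hz'
  · filter_upwards [hX (qGoodAbs_qAbs_iff.1 hgood)] with z hz
    exact .qAbs_body hz

theorem QGood.eventually_qFresh {X : QTerm var varsort index bindex opsym} (hX : QGood X)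
    (zs : varsort) : ∀ᶠ z in cocardinal var hreg, QFresh zs z X :=
  (eventually_qFresh_of_qGood hreg zs).1 X hX

end Fresh

/-! ### Alpha-equivalence -/

section Alpha

variable {xs zs : varsort} {x z : var} {d : opsym} {X X' Z : QTerm var varsort index bindex opsym}
  {A : QAbs var varsort index bindex opsym}
  {inp inp' : Input index (QTerm var varsort index bindex opsym)}
  {binp binp' : Input bindex (QAbs var varsort index bindex opsym)}

theorem alpha_qVar_iff : Alpha (.qVar xs x) Z ↔ Z = .qVar xs x :=
  ⟨fun | .qVar => rfl, fun h => h ▸ .qVar⟩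

theorem Alpha.of_liftR (h : liftR Alpha inp inp') (h' : liftR AlphaAbs binp binp') :
    Alpha (.qOp d inp binp) (.qOp d inp' binp') :=
  have h := liftR_iff.1 h
  have h' := liftR_iff.1 h'
  .qOp h.1 h.2 h'.1 h'.2

theorem alpha_qOp_iff : Alpha (.qOp d inp binp) Z ↔
    ∃ inp' binp', Z = .qOp d inp' binp' ∧ liftR Alpha inp inp' ∧ liftR AlphaAbs binp binp' := by
  constructor
  · rintro ⟨⟩
    exact ⟨_, _, rfl, liftR_iff.2 ⟨‹_›, ‹_›⟩, liftR_iff.2 ⟨‹_›, ‹_›⟩⟩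
  · rintro ⟨inp', binp', rfl, h, h'⟩
    exact .of_liftR h h'

theorem alphaAbs_qAbs_iff : AlphaAbs (.qAbs xs x X) A ↔
    ∃ x' X' y, A = .qAbs xs x' X' ∧ y ≠ x ∧ y ≠ x' ∧ QFresh xs y X ∧ QFresh xs y X' ∧
      Alpha (swapPerm xs y x • X) (swapPerm xs y x' • X') := by
  simp only [← qSwap_eq_smul]
  constructor
  · rintro ⟨hy, hX, hX', h⟩
    simp only [Set.mem_insert_iff, Set.mem_singleton_iff, not_or] at hy
    exact ⟨_, _, _, rfl, hy.1, hy.2, hX, hX', h⟩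
  · rintro ⟨x', X', y, rfl, hx, hx', hX, hX', h⟩
    exact .qAbs (by simp [hx, hx']) hX hX' h

theorem alpha_symm :
    (∀ X : QTerm var varsort index bindex opsym, ∀ X', Alpha X X' → Alpha X' X) ∧
      ∀ A : QAbs var varsort index bindex opsym, ∀ A', AlphaAbs A A' → AlphaAbs A' A := by
  refine QTerm.induction_up_to_renaming (fun xs x Z h => ?_)
    (fun d inp binp hinp hbinp Z h => ?_) fun xs x X hX A h => ?_
  · obtain rfl := alpha_qVar_iff.1 h
    exact .qVar
  · obtain ⟨inp', binp', rfl, h, h'⟩ := alpha_qOp_iff.1 h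
    exact .of_liftR (h.imp fun i X X' hi => hinp i X hi X').swap
      (h'.imp fun j A A' hj => hbinp j A hj A').swap
  · obtain ⟨x', X', y, rfl, hx, hx', hfX, hfX', h⟩ := alphaAbs_qAbs_iff.1 h
    exact alphaAbs_qAbs_iff.2 ⟨x, X, y, rfl, hx', hx, hfX', hfX, hX _ _ h⟩

theorem qGood_of_alpha :
    (∀ X : QTerm var varsort index bindex opsym, ∀ X', Alpha X X' → QGood X → QGood X') ∧
      ∀ A : QAbs var varsort index bindex opsym, ∀ A', AlphaAbs A A' → QGoodAbs A →
        QGoodAbs A' := by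
  refine QTerm.induction_up_to_renaming (fun xs x Z h hgood => ?_)
    (fun d inp binp hinp hbinp Z h hgood => ?_) fun xs x X hX A h hgood => ?_
  · rwa [alpha_qVar_iff.1 h]
  · obtain ⟨inp', binp', rfl, h, h'⟩ := alpha_qOp_iff.1 h
    obtain ⟨hg, hg', hs, hs'⟩ := qGood_qOp_iff.1 hgood
    rw [smallDom, h.idom_eq] at hs
    rw [smallDom, h'.idom_eq] at hs'
    exact .qOp (h.liftP_right fun i X X' hi hXX' => hinp i X hi X' hXX' (hg i X hi))
      (h'.liftP_right fun j A A' hj hAA' => hbinp j A hj A' hAA' (hg' j A hj)) hs hs'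
  · obtain ⟨x', X', y, rfl, -, -, -, -, h⟩ := alphaAbs_qAbs_iff.1 h
    have hgood' := hX _ _ h ((qGoodAbs_qAbs_iff.1 hgood).smul _)
    exact .qAbs (((qGood_smul_iff _).1 X').1 hgood')

theorem qFresh_of_alpha (zs : varsort) (z : var) :
    (∀ X : QTerm var varsort index bindex opsym, ∀ X', Alpha X X' → QFresh zs z X →
      QFresh zs z X') ∧
    ∀ A : QAbs var varsort index bindex opsym, ∀ A', AlphaAbs A A' → QFreshAbs zs z A →
      QFreshAbs zs z A' := by
  refine QTerm.induction_up_to_renaming (fun xs x Z h hfresh => ?_)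
    (fun d inp binp hinp hbinp Z h hfresh => ?_) fun xs x X hX A h hfresh => ?_
  · rwa [alpha_qVar_iff.1 h]
  · obtain ⟨inp', binp', rfl, h, h'⟩ := alpha_qOp_iff.1 h
    obtain ⟨hf, hf'⟩ := qFresh_qOp_iff.1 hfresh
    exact .qOp (h.liftP_right fun i X X' hi hXX' => hinp i X hi X' hXX' (hf i X hi))
      (h'.liftP_right fun j A A' hj hAA' => hbinp j A hj A' hAA' (hf' j A hj))
  · obtain ⟨x', X', y, rfl, -, -, hfX, hfX', h⟩ := alphaAbs_qAbs_iff.1 h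
    rw [qFreshAbs_qAbs_iff_swapPerm hfX] at hfresh
    rw [qFreshAbs_qAbs_iff_swapPerm hfX']
    exact hfresh.imp_right (hX _ _ h)

theorem AlphaAbs.qFreshAbs_iff {A' : QAbs var varsort index bindex opsym} (h : AlphaAbs A A') :
    QFreshAbs zs z A ↔ QFreshAbs zs z A' :=
  ⟨(qFresh_of_alpha zs z).2 A A' h, (qFresh_of_alpha zs z).2 A' A (alpha_symm.2 A A' h)⟩

theorem Alpha.symm (h : Alpha X X') : Alpha X' X := alpha_symm.1 X X' h

theorem Alpha.qFresh_iff (h : Alpha X X') : QFresh zs z X ↔ QFresh zs z X' :=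
  ⟨(qFresh_of_alpha zs z).1 X X' h, (qFresh_of_alpha zs z).1 X' X h.symm⟩

theorem Alpha.qGood (h : Alpha X X') (hX : QGood X) : QGood X' := qGood_of_alpha.1 X X' h hX

end Alpha

/-! ### Renaming and alpha-equivalence -/

/-- `π` and `σ` agree on the free variables of the quasiterm `X`: they act on `X` in the same way up
to alpha-equivalence. -/
def AgreeOnFree (π σ : SortedPerm var varsort) (X : QTerm var varsort index bindex opsym) : Prop :=
  ∀ zs z, ¬QFresh zs z X → π zs z = σ zs z

/-- `π` and `σ` agree on the free variables of the quasiabstraction `A`. -/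
def AgreeOnFreeAbs (π σ : SortedPerm var varsort) (A : QAbs var varsort index bindex opsym) :
    Prop :=
  ∀ zs z, ¬QFreshAbs zs z A → π zs z = σ zs z

section AgreeOnFree

variable {π σ : SortedPerm var varsort} {xs : varsort} {x x' y v : var}
  {X X' : QTerm var varsort index bindex opsym}

theorem agreeOnFree_refl : AgreeOnFree π π X := fun _ _ _ => rfl

theorem agreeOnFree_qOp_iff {d : opsym}
    {inp : Input index (QTerm var varsort index bindex opsym)}
    {binp : Input bindex (QAbs var varsort index bindex opsym)} :
    AgreeOnFree π σ (.qOp d inp binp) ↔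
      liftP (AgreeOnFree π σ) inp ∧ liftP (AgreeOnFreeAbs π σ) binp := by
  simp only [AgreeOnFree, AgreeOnFreeAbs, qFresh_qOp_iff, liftP]
  grind

theorem agreeOnFreeAbs_swapPerm_mul (hv : QFresh xs v (π • X)) :
    AgreeOnFreeAbs (swapPerm xs v (π xs x) * π) π (.qAbs xs x X) := by
  intro zs z hz
  obtain ⟨hne, hfree⟩ := not_or.1 (mt qFreshAbs_qAbs_iff.2 hz)
  rw [← (qFresh_smul_iff π zs z).1 X] at hfree
  refine swapPerm_apply_of_ne (hv.ne_of_not_qFresh hfree) fun heq => ?_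
  obtain ⟨rfl, hπ⟩ := Prod.ext_iff.1 heq
  exact hne (congrArg _ ((π zs).injective hπ))

theorem AgreeOnFreeAbs.mul_swapPerm (h : AgreeOnFreeAbs π σ (.qAbs xs x X))
    (hxx' : π xs x = σ xs x') (hx' : QFreshAbs xs x' (.qAbs xs x X)) (hy : QFresh xs y X) :
    AgreeOnFree (π * swapPerm xs y x) (σ * swapPerm xs y x') (swapPerm xs y x • X) := by
  intro zs z hz
  simp only [Pi.mul_apply, Equiv.Perm.mul_apply]
  obtain heq | hne := eq_or_ne (zs, z) (xs, y)
  · obtain ⟨rfl, rfl⟩ := Prod.ext_iff.1 heq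
    simpa only [swapPerm_apply_left] using hxx'
  · have hfree : ¬QFreshAbs zs z (.qAbs xs x X) := by
      rw [qFreshAbs_qAbs_iff_swapPerm hy]
      exact not_or.2 ⟨hne, hz⟩
    have hnex : (zs, z) ≠ (xs, x) := by
      rintro ⟨⟩
      exact hfree .qAbs_bound
    have hnex' : (zs, z) ≠ (xs, x') := by
      rintro ⟨⟩
      exact hfree hx'
    rw [swapPerm_apply_of_ne hne hnex, swapPerm_apply_of_ne hne hnex', h zs z hfree]

/-- By this agreement, an alpha-equivalence of the two bodies with `y` in place of the bound
variables turns into one of the renamed bodies with `v` in place of the renamed bound variables. -/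
theorem AlphaAbs.agreeOnFree_swapPerm (hA : AlphaAbs (.qAbs xs x X) (.qAbs xs x' X'))
    (h : AgreeOnFreeAbs π σ (.qAbs xs x X)) (hy : QFresh xs y X) (hv : QFresh xs v (π • X))
    (hv' : QFresh xs v (σ • X')) :
    AgreeOnFree (swapPerm xs v (π xs x) * π * swapPerm xs y x)
      (swapPerm xs v (σ xs x') * σ * swapPerm xs y x') (swapPerm xs y x • X) := by
  have hagree : AgreeOnFreeAbs (swapPerm xs v (π xs x) * π) (swapPerm xs v (σ xs x') * σ)
      (.qAbs xs x X) := fun zs z hz =>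
    calc (swapPerm xs v (π xs x) * π) zs z = π zs z := agreeOnFreeAbs_swapPerm_mul hv zs z hz
      _ = σ zs z := h zs z hz
      _ = (swapPerm xs v (σ xs x') * σ) zs z :=
        (agreeOnFreeAbs_swapPerm_mul hv' zs z (mt hA.qFreshAbs_iff.2 hz)).symm
  refine hagree.mul_swapPerm ?_ (hA.qFreshAbs_iff.2 .qAbs_bound) hy
  simp only [Pi.mul_apply, Equiv.Perm.mul_apply, swapPerm_apply_right]

theorem smul_swapPerm_smul (π : SortedPerm var varsort) (zs : varsort) (z₁ z₂ : var)
    (X : QTerm var varsort index bindex opsym) :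
    (π * swapPerm zs z₁ z₂) • swapPerm zs z₁ z₂ • X = π • X := by
  rw [mul_smul, ← mul_smul (swapPerm zs z₁ z₂), swapPerm_mul_self, one_smul]

end AgreeOnFree

section AlphaRenaming

open Filter

variable (hreg : (Cardinal.mk var).IsRegular) {xs : varsort} {x x' w : var}
  {X X' X'' : QTerm var varsort index bindex opsym} {π σ : SortedPerm var varsort}

include hreg

theorem alphaAbs_of_eventually (hX : QGood X) (hX' : QGood X')
    (h : ∀ᶠ w in cocardinal var hreg, QFresh xs w X → QFresh xs w X' →
      Alpha (swapPerm xs w x • X) (swapPerm xs w x' • X')) :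
    AlphaAbs (.qAbs xs x X) (.qAbs xs x' X') := by
  obtain ⟨w, hw, hfX, hfX', hne, hne'⟩ := exists_of_eventually_cocardinal hreg <|
    h.and <| (hX.eventually_qFresh hreg xs).and <| (hX'.eventually_qFresh hreg xs).and <|
      (eventually_cocardinal_ne x).and (eventually_cocardinal_ne x')
  exact alphaAbs_qAbs_iff.2 ⟨x', X', w, rfl, hne, hne', hfX, hfX', hw hfX hfX'⟩

theorem alpha_smul_of_agreeOnFree :
    (∀ X : QTerm var varsort index bindex opsym, ∀ X' (π σ : SortedPerm var varsort),
      Alpha X X' → QGood X → AgreeOnFree π σ X → Alpha (π • X) (σ • X')) ∧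
    ∀ A : QAbs var varsort index bindex opsym, ∀ A' (π σ : SortedPerm var varsort),
      AlphaAbs A A' → QGoodAbs A → AgreeOnFreeAbs π σ A → AlphaAbs (π • A) (σ • A') := by
  refine QTerm.induction_up_to_renaming (fun xs x Z π σ h _ hagree => ?_)
    (fun d inp binp hinp hbinp Z π σ h hgood hagree => ?_)
    fun xs x X hX A π σ hA hgood hagree => ?_
  · obtain rfl := alpha_qVar_iff.1 h
    rw [smul_qVar, smul_qVar, hagree xs x fun hfresh => qFresh_qVar_iff.1 hfresh rfl]
    exact .qVar
  · obtain ⟨inp', binp', rfl, h, h'⟩ := alpha_qOp_iff.1 h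
    obtain ⟨hg, hg', -, -⟩ := qGood_qOp_iff.1 hgood
    obtain ⟨ha, ha'⟩ := agreeOnFree_qOp_iff.1 hagree
    rw [smul_qOp, smul_qOp]
    refine .of_liftR ?_ ?_ <;> rw [liftR_liftF_left, liftR_liftF_right]
    · exact h.imp fun i X X' hi hXX' => hinp i X hi X' π σ hXX' (hg i X hi) (ha i X hi)
    · exact h'.imp fun j A A' hj hAA' => hbinp j A hj A' π σ hAA' (hg' j A hj) (ha' j A hj)
  · obtain ⟨x', X', y, rfl, -, -, hfX, -, h⟩ := alphaAbs_qAbs_iff.1 hA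
    have hgX := qGoodAbs_qAbs_iff.1 hgood
    have hgX' := qGoodAbs_qAbs_iff.1 (qGood_of_alpha.2 _ _ hA hgood)
    refine alphaAbs_of_eventually hreg (hgX.smul π) (hgX'.smul σ) (.of_forall fun v hv hv' => ?_)
    have hbody := hX _ _ _ _ h (hgX.smul _) (hA.agreeOnFree_swapPerm hagree hfX hv hv')
    rwa [smul_swapPerm_smul, smul_swapPerm_smul, mul_smul, mul_smul] at hbody

theorem Alpha.smul_of_agreeOnFree (h : Alpha X X') (hX : QGood X) (hagree : AgreeOnFree π σ X) :
    Alpha (π • X) (σ • X') :=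
  (alpha_smul_of_agreeOnFree hreg).1 X X' π σ h hX hagree

theorem Alpha.smul (h : Alpha X X') (hX : QGood X) (π : SortedPerm var varsort) :
    Alpha (π • X) (π • X') :=
  h.smul_of_agreeOnFree hreg hX agreeOnFree_refl

theorem AlphaAbs.alpha_swapPerm_smul (h : AlphaAbs (.qAbs xs x X) (.qAbs xs x' X')) (hX : QGood X)
    (hw : QFresh xs w X) (hw' : QFresh xs w X') :
    Alpha (swapPerm xs w x • X) (swapPerm xs w x' • X') := by
  obtain ⟨x', X', y, ⟨⟩, -, -, hfX, -, hbody⟩ := alphaAbs_qAbs_iff.1 h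
  have hagree := h.agreeOnFree_swapPerm (π := 1) (σ := 1) (v := w) (fun _ _ _ => rfl) hfX
    (by rwa [one_smul]) (by rwa [one_smul])
  simpa only [smul_swapPerm_smul, mul_one, Pi.one_apply, Equiv.Perm.one_apply] using
    hbody.smul_of_agreeOnFree hreg (hX.smul _) hagree

theorem alpha_refl_of_qGood :
    (∀ X : QTerm var varsort index bindex opsym, QGood X → Alpha X X) ∧
      ∀ A : QAbs var varsort index bindex opsym, QGoodAbs A → AlphaAbs A A := by
  refine QTerm.induction_up_to_renaming (fun xs x _ => .qVar)
    (fun d inp binp hinp hbinp hgood => ?_) fun xs x X hX hgood => ?_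
  · obtain ⟨hg, hg', -, -⟩ := qGood_qOp_iff.1 hgood
    exact .of_liftR (liftR_self_iff.2 fun i X hi => hinp i X hi (hg i X hi))
      (liftR_self_iff.2 fun j A hj => hbinp j A hj (hg' j A hj))
  · have hgX := qGoodAbs_qAbs_iff.1 hgood
    exact alphaAbs_of_eventually hreg hgX hgX (.of_forall fun _ _ _ => hX _ (hgX.smul _))

theorem QGood.alpha_refl (hX : QGood X) : Alpha X X := (alpha_refl_of_qGood hreg).1 X hX

theorem QGoodAbs.alphaAbs_refl {A : QAbs var varsort index bindex opsym} (hA : QGoodAbs A) :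
    AlphaAbs A A :=
  (alpha_refl_of_qGood hreg).2 A hA

theorem alpha_euclidean :
    (∀ X : QTerm var varsort index bindex opsym, ∀ X' X'', QGood X → Alpha X X' → Alpha X X'' →
      Alpha X' X'') ∧
    ∀ A : QAbs var varsort index bindex opsym, ∀ A' A'', QGoodAbs A → AlphaAbs A A' →
      AlphaAbs A A'' → AlphaAbs A' A'' := by
  refine QTerm.induction_up_to_renaming (fun xs x X' X'' _ h₁ h₂ => ?_)
    (fun d inp binp hinp hbinp X' X'' hgood h₁ h₂ => ?_)
    fun xs x X hX A' A'' hgood h₁ h₂ => ?_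
  · obtain rfl := alpha_qVar_iff.1 h₁
    exact h₂
  · obtain ⟨hg, hg', -, -⟩ := qGood_qOp_iff.1 hgood
    obtain ⟨inp₁, binp₁, rfl, h₁, h₁'⟩ := alpha_qOp_iff.1 h₁
    obtain ⟨inp₂, binp₂, rfl, h₂, h₂'⟩ := alpha_qOp_iff.1 h₂
    exact .of_liftR (h₁.join h₂ fun i X X' X'' hi => hinp i X hi X' X'' (hg i X hi))
      (h₁'.join h₂' fun j A A' A'' hj => hbinp j A hj A' A'' (hg' j A hj))
  · obtain ⟨x₁, X₁, -, rfl, -⟩ := alphaAbs_qAbs_iff.1 h₁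
    obtain ⟨x₂, X₂, -, rfl, -⟩ := alphaAbs_qAbs_iff.1 h₂
    have hgX := qGoodAbs_qAbs_iff.1 hgood
    have hgX₁ := qGoodAbs_qAbs_iff.1 (qGood_of_alpha.2 _ _ h₁ hgood)
    have hgX₂ := qGoodAbs_qAbs_iff.1 (qGood_of_alpha.2 _ _ h₂ hgood)
    refine alphaAbs_of_eventually hreg hgX₁ hgX₂ ?_
    filter_upwards [hgX.eventually_qFresh hreg xs] with w hw hw₁ hw₂
    exact hX _ _ _ (hgX.smul _) (h₁.alpha_swapPerm_smul hreg hgX hw hw₁)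
      (h₂.alpha_swapPerm_smul hreg hgX hw hw₂)

theorem Alpha.trans (h : Alpha X X') (h' : Alpha X' X'') (hX : QGood X) : Alpha X X'' :=
  (alpha_euclidean hreg).1 X' X X'' (h.qGood hX) h.symm h'

theorem Alpha.alphaAbs (h : Alpha X X') (hX : QGood X) (xs : varsort) (x : var) :
    AlphaAbs (.qAbs xs x X) (.qAbs xs x X') :=
  alphaAbs_of_eventually hreg hX (h.qGood hX) (.of_forall fun _ _ _ => h.smul hreg hX _)

theorem Alpha.swapPerm_smul_of_qFresh (h : Alpha X X') (hX : QGood X) (hw : QFresh xs w X)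
    (hx : QFresh xs x X) (hx' : QFresh xs x' X) :
    Alpha (swapPerm xs w x • X) (swapPerm xs w x' • X') := by
  refine h.smul_of_agreeOnFree hreg hX fun zs z hz => ?_
  rw [swapPerm_apply_of_ne (hw.ne_of_not_qFresh hz) (hx.ne_of_not_qFresh hz),
    swapPerm_apply_of_ne (hw.ne_of_not_qFresh hz) (hx'.ne_of_not_qFresh hz)]

theorem alphaAbs_swapPerm_smul (hX : QGood X) (hw : QFresh xs w X) (x : var) :
    AlphaAbs (.qAbs xs x X) (.qAbs xs w (swapPerm xs w x • X)) := by
  refine alphaAbs_of_eventually hreg hX (hX.smul _) (.of_forall fun y hy _ => ?_)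
  rw [← mul_smul]
  refine (hX.alpha_refl hreg).smul_of_agreeOnFree hreg hX fun zs z hz => ?_
  have hzy := hy.ne_of_not_qFresh hz
  have hzw := hw.ne_of_not_qFresh hz
  rw [Pi.mul_apply, Equiv.Perm.mul_apply]
  obtain heq | hzx := eq_or_ne (zs, z) (xs, x)
  · obtain ⟨rfl, rfl⟩ := Prod.ext_iff.1 heq
    simp only [swapPerm_apply_right]
  · rw [swapPerm_apply_of_ne hzw hzx, swapPerm_apply_of_ne hzy hzx, swapPerm_apply_of_ne hzy hzw]

end AlphaRenaming

/-! ### Substitution on quasiterms -/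

section QSubst

variable {xs ys : varsort} {x y w : var} {d : opsym} {X Y Z : QTerm var varsort index bindex opsym}
  {A B : QAbs var varsort index bindex opsym}
  {inp inp' : Input index (QTerm var varsort index bindex opsym)}
  {binp binp' : Input bindex (QAbs var varsort index bindex opsym)}

theorem qSubst_qVar_iff :
    QSubst (.qVar xs x) Y y ys Z ↔ Z = if (xs, x) = (ys, y) then Y else .qVar xs x := by
  constructor
  · rintro (_ | hne)
    · rw [if_pos rfl]
    · rw [if_neg ‹_›]
  · rintro rfl
    split_ifs with h
    · obtain ⟨rfl, rfl⟩ := Prod.ext_iff.1 h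
      exact .var_eq
    · exact .var_ne h

theorem QSubst.of_liftR (h : liftR (QSubst · Y y ys ·) inp inp')
    (h' : liftR (QSubstAbs · Y y ys ·) binp binp') :
    QSubst (.qOp d inp binp) Y y ys (.qOp d inp' binp') :=
  have h := liftR_iff.1 h
  have h' := liftR_iff.1 h'
  .op h.1 h.2 h'.1 h'.2

theorem qSubst_qOp_iff : QSubst (.qOp d inp binp) Y y ys Z ↔
    ∃ inp' binp', Z = .qOp d inp' binp' ∧ liftR (QSubst · Y y ys ·) inp inp' ∧
      liftR (QSubstAbs · Y y ys ·) binp binp' := by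
  constructor
  · rintro ⟨⟩
    exact ⟨_, _, rfl, liftR_iff.2 ⟨‹_›, ‹_›⟩, liftR_iff.2 ⟨‹_›, ‹_›⟩⟩
  · rintro ⟨inp', binp', rfl, h, h'⟩
    exact .of_liftR h h'

theorem qSubstAbs_qAbs_iff : QSubstAbs (.qAbs xs x X) Y y ys B ↔
    ∃ Z, B = .qAbs xs x Z ∧ (xs, x) ≠ (ys, y) ∧ QFresh xs x Y ∧ QSubst X Y y ys Z := by
  constructor
  · rintro ⟨hne, hfresh, h⟩
    exact ⟨_, rfl, hne, hfresh, h⟩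
  · rintro ⟨Z, rfl, hne, hfresh, h⟩
    exact .abs hne hfresh h

theorem qSubst_smul (π : SortedPerm var varsort) (Y : QTerm var varsort index bindex opsym)
    (y : var) (ys : varsort) :
    (∀ X Z, QSubst X Y y ys Z → QSubst (π • X) (π • Y) (π ys y) ys (π • Z)) ∧
      ∀ A B, QSubstAbs A Y y ys B → QSubstAbs (π • A) (π • Y) (π ys y) ys (π • B) := by
  have hπ : ∀ {xs x}, (xs, π xs x) = (ys, π ys y) ↔ (xs, x) = (ys, y) := by
    simp +contextual [Prod.ext_iff]
  refine QTerm.structural_induction (fun xs x Z h => ?_) (fun d inp binp hinp hbinp Z h => ?_)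
    fun xs x X hX B h => ?_
  · rw [qSubst_qVar_iff.1 h, smul_qVar, qSubst_qVar_iff]
    simp only [hπ]
    split_ifs <;> rfl
  · obtain ⟨inp', binp', rfl, h, h'⟩ := qSubst_qOp_iff.1 h
    rw [smul_qOp, smul_qOp]
    refine .of_liftR ?_ ?_ <;> rw [liftR_liftF_left, liftR_liftF_right]
    · exact h.imp fun i X Z hi => hinp i X hi Z
    · exact h'.imp fun j A B hj => hbinp j A hj B
  · obtain ⟨Z, rfl, hne, hfresh, h⟩ := qSubstAbs_qAbs_iff.1 h
    exact .abs (mt hπ.1 hne) (((qFresh_smul_iff π xs x).1 Y).2 hfresh) (hX Z h)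

theorem QSubst.swapPerm_smul (h : QSubst X Y y ys Z) (hw : (ys, y) ≠ (xs, w))
    (hx : (ys, y) ≠ (xs, x)) :
    QSubst (swapPerm xs w x • X) (swapPerm xs w x • Y) y ys (swapPerm xs w x • Z) := by
  simpa only [swapPerm_apply_of_ne hw hx] using (qSubst_smul (swapPerm xs w x) Y y ys).1 X Z h

theorem qGood_of_qSubst (hY : QGood Y) :
    (∀ X Z, QSubst X Y y ys Z → QGood X → QGood Z) ∧
      ∀ A B, QSubstAbs A Y y ys B → QGoodAbs A → QGoodAbs B := by
  refine QTerm.structural_induction (fun xs x Z h hgood => ?_)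
    (fun d inp binp hinp hbinp Z h hgood => ?_) fun xs x X hX B h hgood => ?_
  · rw [qSubst_qVar_iff.1 h]
    split_ifs
    exacts [hY, hgood]
  · obtain ⟨inp', binp', rfl, h, h'⟩ := qSubst_qOp_iff.1 h
    obtain ⟨hg, hg', hs, hs'⟩ := qGood_qOp_iff.1 hgood
    rw [smallDom, h.idom_eq] at hs
    rw [smallDom, h'.idom_eq] at hs'
    exact .qOp (h.liftP_right fun i X Z hi hXZ => hinp i X hi Z hXZ (hg i X hi))
      (h'.liftP_right fun j A B hj hAB => hbinp j A hj B hAB (hg' j A hj)) hs hs'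
  · obtain ⟨Z, rfl, -, -, h⟩ := qSubstAbs_qAbs_iff.1 h
    exact .qAbs (hX Z h (qGoodAbs_qAbs_iff.1 hgood))

end QSubst

section QSubstAlpha

open Filter

variable (hreg : (Cardinal.mk var).IsRegular)

include hreg

theorem alpha_of_qSubst (y : var) (ys : varsort) :
    (∀ X X' Y Y' Z Z' : QTerm var varsort index bindex opsym, QGood X → QGood Y → Alpha X X' →
      Alpha Y Y' → QSubst X Y y ys Z → QSubst X' Y' y ys Z' → Alpha Z Z') ∧
    ∀ A A' (Y Y' : QTerm var varsort index bindex opsym) B B', QGoodAbs A → QGood Y →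
      AlphaAbs A A' → Alpha Y Y' → QSubstAbs A Y y ys B → QSubstAbs A' Y' y ys B' →
      AlphaAbs B B' := by
  refine QTerm.induction_up_to_renaming (fun xs x X' Y Y' Z Z' _ _ hα hY h h' => ?_)
    (fun d inp binp hinp hbinp X' Y Y' Z Z' hgood hgY hα hY h h' => ?_)
    fun xs x X hX A' Y Y' B B' hgood hgY hα hY h h' => ?_
  · obtain rfl := alpha_qVar_iff.1 hα
    rw [qSubst_qVar_iff.1 h, qSubst_qVar_iff.1 h']
    split_ifs
    exacts [hY, hα]
  · obtain ⟨inp', binp', rfl, hα, hα'⟩ := alpha_qOp_iff.1 hα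
    obtain ⟨hg, hg', -, -⟩ := qGood_qOp_iff.1 hgood
    obtain ⟨out, bout, rfl, hs, hbs⟩ := qSubst_qOp_iff.1 h
    obtain ⟨out', bout', rfl, hs', hbs'⟩ := qSubst_qOp_iff.1 h'
    refine .of_liftR (hs.join (hα.comp hs') ?_) (hbs.join (hα'.comp hbs') ?_)
    · exact fun i X Z Z' hi hXZ ⟨X', hXX', hXZ'⟩ =>
        hinp i X hi X' Y Y' Z Z' (hg i X hi) hgY hXX' hY hXZ hXZ'
    · exact fun j A B B' hj hAB ⟨A', hAA', hAB'⟩ =>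
        hbinp j A hj A' Y Y' B B' (hg' j A hj) hgY hAA' hY hAB hAB'
  · obtain ⟨x', X', -, rfl, -⟩ := alphaAbs_qAbs_iff.1 hα
    obtain ⟨Z, rfl, hne, hfY, hs⟩ := qSubstAbs_qAbs_iff.1 h
    obtain ⟨Z', rfl, hne', hfY', hs'⟩ := qSubstAbs_qAbs_iff.1 h'
    have hgX := qGoodAbs_qAbs_iff.1 hgood
    have hgX' := qGoodAbs_qAbs_iff.1 (qGood_of_alpha.2 _ _ hα hgood)
    have hgZ := (qGood_of_qSubst hgY).1 X Z hs hgX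
    have hgZ' := (qGood_of_qSubst (hY.qGood hgY)).1 X' Z' hs' hgX'
    refine alphaAbs_of_eventually hreg hgZ hgZ' ?_
    filter_upwards [hgX.eventually_qFresh hreg xs, hgX'.eventually_qFresh hreg xs,
      hgY.eventually_qFresh hreg xs, eventually_cocardinal_ne y] with w hwX hwX' hwY hwy _ _
    have hwy : (ys, y) ≠ (xs, w) := fun heq => hwy (Prod.ext_iff.1 heq).2.symm
    have hX_alpha := hα.alpha_swapPerm_smul hreg hgX hwX hwX'
    have hY_alpha := hY.swapPerm_smul_of_qFresh hreg hgY hwY hfY (hY.qFresh_iff.2 hfY')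
    exact hX _ _ _ _ _ _ (hgX.smul _) (hgY.smul _) hX_alpha hY_alpha
      (hs.swapPerm_smul hwy hne.symm) (hs'.swapPerm_smul hwy hne'.symm)

theorem exists_alpha_qSubst {Y : QTerm var varsort index bindex opsym} (hY : QGood Y) (y : var)
    (ys : varsort) :
    (∀ X, QGood X → ∃ Z, Relation.Comp Alpha (QSubst · Y y ys ·) X Z) ∧
      ∀ A, QGoodAbs A → ∃ B, Relation.Comp AlphaAbs (QSubstAbs · Y y ys ·) A B := by
  refine QTerm.induction_up_to_renaming (fun xs x _ => ⟨_, _, .qVar, qSubst_qVar_iff.2 rfl⟩)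
    (fun d inp binp hinp hbinp hgood => ?_) fun xs x X hX hgood => ?_
  · obtain ⟨hg, hg', -, -⟩ := qGood_qOp_iff.1 hgood
    obtain ⟨out, hout⟩ := liftP.exists_liftR fun i X hi => hinp i X hi (hg i X hi)
    obtain ⟨bout, hbout⟩ := liftP.exists_liftR fun j A hj => hbinp j A hj (hg' j A hj)
    obtain ⟨inp', hα, hs⟩ := hout.exists_of_comp
    obtain ⟨binp', hα', hs'⟩ := hbout.exists_of_comp
    exact ⟨_, _, .of_liftR hα hα', .of_liftR hs hs'⟩
  · have hgX := qGoodAbs_qAbs_iff.1 hgood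
    obtain ⟨w, ⟨hwX, hwY⟩, hwy⟩ := exists_of_eventually_cocardinal hreg <|
      ((hgX.eventually_qFresh hreg xs).and (hY.eventually_qFresh hreg xs)).and
        (eventually_cocardinal_ne y)
    obtain ⟨Z, X', hα, hs⟩ := hX (swapPerm xs w x) (hgX.smul _)
    have hα' := hα.alphaAbs hreg (hgX.smul _) xs w
    have hα_swap := (alpha_symm.2 _ _ (alphaAbs_swapPerm_smul hreg hgX hwX x))
    exact ⟨_, _, (alpha_euclidean hreg).2 _ _ _ (.qAbs (hgX.smul _)) hα_swap hα',
      .abs (fun heq => hwy (Prod.ext_iff.1 heq).2) hwY hs⟩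

end QSubstAlpha

/-! ### Terms and substitution on terms -/

section Quotient

theorem rel_of_quot_mk_eq {α : Type u} {r : α → α → Prop} {p : α → Prop} {a b : α}
    (hrefl : ∀ a, p a → r a a) (hsymm : ∀ a b, r a b → r b a)
    (htrans : ∀ a b c, p a → r a b → r b c → r a c) (hp : ∀ a b, r a b → p a → p b)
    (ha : p a) (h : Quot.mk r a = Quot.mk r b) : r a b := by
  have hgen := Quot.eqvGen_exact h
  suffices (p a ↔ p b) ∧ (p a → r a b) from this.2 ha
  clear ha h
  induction hgen with
  | rel a b h => exact ⟨⟨hp a b h, hp b a (hsymm a b h)⟩, fun _ => h⟩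
  | refl a => exact ⟨.rfl, hrefl a⟩
  | symm a b _ ih => exact ⟨ih.1.symm, fun hb => hsymm a b (ih.2 (ih.1.2 hb))⟩
  | trans a b c _ _ ihab ihbc =>
    exact ⟨ihab.1.trans ihbc.1,
      fun ha => htrans a b c ha (ihab.2 ha) (ihbc.2 (ihab.1.1 ha))⟩

variable {xs ys : varsort} {x y : var} {d : opsym} {X Y Z : Term var varsort index bindex opsym}
  {A B : Abstr var varsort index bindex opsym} {qX qZ : QTerm var varsort index bindex opsym}
  {qA qB : QAbs var varsort index bindex opsym}

theorem tmk_trep (X : Term var varsort index bindex opsym) : tmk (trep X) = X := Quot.out_eq X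

theorem amk_arep (A : Abstr var varsort index bindex opsym) : amk (arep A) = A := Quot.out_eq A

variable (hreg : (Cardinal.mk var).IsRegular)

include hreg

theorem QGood.alpha_of_tmk_eq (hX : QGood qX) (h : tmk qX = tmk qZ) : Alpha qX qZ :=
  rel_of_quot_mk_eq (p := QGood) (fun _ hX => hX.alpha_refl hreg) (fun _ _ h => h.symm)
    (fun _ _ _ hX h h' => h.trans hreg h' hX) (fun _ _ h => h.qGood) hX h

theorem QGoodAbs.alphaAbs_of_amk_eq (hA : QGoodAbs qA) (h : amk qA = amk qB) : AlphaAbs qA qB :=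
  rel_of_quot_mk_eq (p := QGoodAbs) (fun _ hA => hA.alphaAbs_refl hreg) alpha_symm.2
    (fun A A' A'' hA h h' => (alpha_euclidean hreg).2 A' A A'' (qGood_of_alpha.2 A A' h hA)
      (alpha_symm.2 A A' h) h') qGood_of_alpha.2 hA h

theorem good_tmk_iff : good (tmk qX) ↔ QGood qX :=
  ⟨fun h => (h.alpha_of_tmk_eq hreg (tmk_trep _)).qGood h,
    fun h => (h.alpha_of_tmk_eq hreg (tmk_trep _).symm).qGood h⟩

theorem goodAbs_amk_iff : goodAbs (amk qA) ↔ QGoodAbs qA :=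
  ⟨fun h => qGood_of_alpha.2 _ _ (QGoodAbs.alphaAbs_of_amk_eq hreg h (amk_arep _)) h,
    fun h => qGood_of_alpha.2 _ _ (h.alphaAbs_of_amk_eq hreg (amk_arep _).symm) h⟩

theorem Op_tmk {inp : Input index (QTerm var varsort index bindex opsym)}
    {binp : Input bindex (QAbs var varsort index bindex opsym)} (hinp : liftP QGood inp)
    (hbinp : liftP QGoodAbs binp) :
    Op d (liftF tmk inp) (liftF amk binp) = tmk (.qOp d inp binp) := by
  rw [Op, liftF_liftF, liftF_liftF]
  refine (Quot.sound (.of_liftR ?_ ?_)).symm <;> rw [liftR_liftF_right, liftR_self_iff]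
  · exact fun i X hi => (hinp i X hi).alpha_of_tmk_eq hreg (tmk_trep _).symm
  · exact fun j A hj => (hbinp j A hj).alphaAbs_of_amk_eq hreg (amk_arep _).symm

theorem Abs_tmk (hX : QGood qX) : Abs xs x (tmk qX) = amk (.qAbs xs x qX) :=
  (Quot.sound ((hX.alpha_of_tmk_eq hreg (tmk_trep _).symm).alphaAbs hreg hX xs x)).symm

end Quotient

section Subst

variable {xs ys : varsort} {x y : var} {d : opsym} {X Y Z : Term var varsort index bindex opsym}
  {A B : Abstr var varsort index bindex opsym}
  {inp : Input index (Term var varsort index bindex opsym)}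
  {binp : Input bindex (Abstr var varsort index bindex opsym)}
  (hreg : (Cardinal.mk var).IsRegular)

include hreg

theorem good_Var : good (Var xs x : Term var varsort index bindex opsym) :=
  (good_tmk_iff hreg).2 .qVar

theorem good_Op (hinp : liftP good inp) (hbinp : liftP goodAbs binp) (hs : smallDom var inp)
    (hs' : smallDom var binp) : good (Op d inp binp) := by
  rw [Op, good_tmk_iff hreg, qGood_qOp_iff, liftP_liftF_iff, liftP_liftF_iff, smallDom, smallDom,
    idom_liftF, idom_liftF]
  exact ⟨hinp, hbinp, hs, hs'⟩

theorem goodAbs_Abs (hX : good X) : goodAbs (Abs xs x X) :=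
  (goodAbs_amk_iff hreg).2 (.qAbs hX)

theorem exists_substRel (hX : good X) (hY : good Y) (y : var) (ys : varsort) :
    ∃ Z, SubstRel X Y y ys Z := by
  obtain ⟨qZ, qX, hα, hs⟩ := (exists_alpha_qSubst hreg hY y ys).1 (trep X) hX
  exact ⟨tmk qZ, qX, qZ, (Quot.sound hα).symm.trans (tmk_trep X), rfl, hs⟩

theorem exists_substAbsRel (hA : goodAbs A) (hY : good Y) (y : var) (ys : varsort) :
    ∃ B, SubstAbsRel A Y y ys B := by
  obtain ⟨qB, qA, hα, hs⟩ := (exists_alpha_qSubst hreg hY y ys).2 (arep A) hA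
  exact ⟨amk qB, qA, qB, (Quot.sound hα).symm.trans (amk_arep A), rfl, hs⟩

theorem SubstRel.unique {Z' : Term var varsort index bindex opsym} (h : SubstRel X Y y ys Z)
    (h' : SubstRel X Y y ys Z') (hX : good X) (hY : good Y) : Z = Z' := by
  obtain ⟨qX, qZ, rfl, rfl, hs⟩ := h
  obtain ⟨qX', qZ', hX', rfl, hs'⟩ := h'
  have hX := (good_tmk_iff hreg).1 hX
  exact Quot.sound ((alpha_of_qSubst hreg y ys).1 _ _ _ _ _ _ hX hY
    (hX.alpha_of_tmk_eq hreg hX'.symm) (QGood.alpha_refl hreg hY) hs hs')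

theorem SubstAbsRel.unique {B' : Abstr var varsort index bindex opsym} (h : SubstAbsRel A Y y ys B)
    (h' : SubstAbsRel A Y y ys B') (hA : goodAbs A) (hY : good Y) : B = B' := by
  obtain ⟨qA, qB, rfl, rfl, hs⟩ := h
  obtain ⟨qA', qB', hA', rfl, hs'⟩ := h'
  have hA := (goodAbs_amk_iff hreg).1 hA
  exact Quot.sound ((alpha_of_qSubst hreg y ys).2 _ _ _ _ _ _ hA hY
    (hA.alphaAbs_of_amk_eq hreg hA'.symm) (QGood.alpha_refl hreg hY) hs hs')

theorem substRel_subst (hX : good X) (hY : good Y) (y : var) (ys : varsort) :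
    SubstRel X Y y ys (subst X Y y ys) := by
  have h := exists_substRel hreg hX hY y ys
  rw [subst, dif_pos h]
  exact h.choose_spec

theorem substAbsRel_substAbs (hA : goodAbs A) (hY : good Y) (y : var) (ys : varsort) :
    SubstAbsRel A Y y ys (substAbs A Y y ys) := by
  have h := exists_substAbsRel hreg hA hY y ys
  rw [substAbs, dif_pos h]
  exact h.choose_spec

theorem SubstRel.subst_eq (h : SubstRel X Y y ys Z) (hX : good X) (hY : good Y) :
    subst X Y y ys = Z :=
  (substRel_subst hreg hX hY y ys).unique hreg h hX hY

theorem SubstAbsRel.substAbs_eq (h : SubstAbsRel A Y y ys B) (hA : goodAbs A) (hY : good Y) :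
    substAbs A Y y ys = B :=
  (substAbsRel_substAbs hreg hA hY y ys).unique hreg h hA hY

theorem subst_Var (hY : good Y) (xs ys : varsort) (x y : var) :
    subst (Var xs x) Y y ys = if (xs, x) = (ys, y) then Y else Var xs x := by
  refine SubstRel.subst_eq hreg ⟨_, _, rfl, ?_, qSubst_qVar_iff.2 rfl⟩ (good_Var hreg) hY
  rw [apply_ite tmk, tmk_trep, Var]

theorem SubstRel.op {out : Input index (Term var varsort index bindex opsym)}
    {bout : Input bindex (Abstr var varsort index bindex opsym)} (hY : good Y)
    (hinp : liftP good inp) (hbinp : liftP goodAbs binp) (h : liftR (SubstRel · Y y ys ·) inp out)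
    (h' : liftR (SubstAbsRel · Y y ys ·) binp bout) :
    SubstRel (Op d inp binp) Y y ys (Op d out bout) := by
  obtain ⟨inp, out, hs, rfl, rfl⟩ := h.exists_liftF_eq
  obtain ⟨binp, bout, hs', rfl, rfl⟩ := h'.exists_liftF_eq
  rw [liftP_liftF_iff] at hinp hbinp
  have hg := (liftP_congr fun _ _ _ => good_tmk_iff hreg).1 hinp
  have hg' := (liftP_congr fun _ _ _ => goodAbs_amk_iff hreg).1 hbinp
  refine ⟨.qOp d inp binp, .qOp d out bout, (Op_tmk hreg hg hg').symm, (Op_tmk hreg ?_ ?_).symm,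
    .of_liftR hs hs'⟩
  · exact hs.liftP_right fun i X Z hi hXZ => (qGood_of_qSubst hY).1 X Z hXZ (hg i X hi)
  · exact hs'.liftP_right fun j A B hj hAB => (qGood_of_qSubst hY).2 A B hAB (hg' j A hj)

theorem SubstRel.abs (h : SubstRel X Y y ys Z) (hX : good X) (hY : good Y)
    (hne : (xs, x) ≠ (ys, y)) (hfresh : fresh xs x Y) :
    SubstAbsRel (Abs xs x X) Y y ys (Abs xs x Z) := by
  obtain ⟨qX, qZ, rfl, rfl, hs⟩ := h
  have hX := (good_tmk_iff hreg).1 hX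
  have hZ := (qGood_of_qSubst hY).1 qX qZ hs hX
  exact ⟨.qAbs xs x qX, .qAbs xs x qZ, (Abs_tmk hreg hX).symm, (Abs_tmk hreg hZ).symm,
    .abs hne hfresh hs⟩

theorem subst_Op (hY : good Y) (hinp : liftP good inp) (hbinp : liftP goodAbs binp)
    (hs : smallDom var inp) (hs' : smallDom var binp) :
    subst (Op d inp binp) Y y ys =
      Op d (liftF (fun Z => subst Z Y y ys) inp) (liftF (fun A => substAbs A Y y ys) binp) := by
  refine (SubstRel.op hreg hY hinp hbinp ?_ ?_).subst_eq hreg (good_Op hreg hinp hbinp hs hs') hY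
    <;> rw [liftR_liftF_right, liftR_self_iff]
  · exact fun i X hi => substRel_subst hreg (hinp i X hi) hY y ys
  · exact fun j A hj => substAbsRel_substAbs hreg (hbinp j A hj) hY y ys

theorem substAbs_Abs (hX : good X) (hY : good Y) (hne : (xs, x) ≠ (ys, y))
    (hfresh : fresh xs x Y) : substAbs (Abs xs x X) Y y ys = Abs xs x (subst X Y y ys) :=
  ((substRel_subst hreg hX hY y ys).abs hreg hX hY hne hfresh).substAbs_eq hreg
    (goodAbs_Abs hreg hX) hY

end Subst

/-- simplification rules for substitution. -/
theorem subst_simp (hinf : Cardinal.aleph0 ≤ Cardinal.mk var)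
    (hreg : (Cardinal.mk var).IsRegular)
    (X Y : Term var varsort index bindex opsym) (d : opsym)
    (inp : Input index (Term var varsort index bindex opsym)) (binp : Input bindex (Abstr var varsort index bindex opsym))
    (hX : good X) (hY : good Y) (hinp : liftP good inp) (hbinp : liftP goodAbs binp)
    (hsi : smallDom var inp) (hsb : smallDom var binp)
    (ys xs : varsort) (y x : var) :
    ((xs, x) = (ys, y) → subst (Var xs x) Y y ys = Y) ∧
    ((xs, x) ≠ (ys, y) → subst (Var xs x) Y y ys = Var xs x) ∧
    (subst (Op d inp binp) Y y ys =
      Op d (liftF (fun Z => subst Z Y y ys) inp) (liftF (fun A => substAbs A Y y ys) binp)) ∧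
    ((xs, x) ≠ (ys, y) → fresh xs x Y →
      substAbs (Abs xs x X) Y y ys = Abs xs x (subst X Y y ys)) :=
  ⟨fun heq => (subst_Var hreg hY xs ys x y).trans (if_pos heq),
    fun hne => (subst_Var hreg hY xs ys x y).trans (if_neg hne),
    subst_Op hreg hY hinp hbinp hsi hsb,
    substAbs_Abs hreg hX hY⟩

end Binding
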